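/- Let Σ_A(ℕ) be a topologically mixing, finitely primitive (BIP) countable Markov shift and f : Σ_A(ℕ) → ℝ satisfy the Walters condition with Var_1 f < ∞ and P(f) < ∞. Suppose f has a unique maximizing measure μ and let I(x) = −Σ_{j=0}^∞ (f + V − V∘σ − m(f))(σ^j(x)) for a bounded calibrated sub-action V. Then the Aubry set coincides with the zero set of the deviation function: Ω(f,σ) = {x ∈ Σ_A(ℕ) : I(x) = 0}. -/

import Mathlib

open Filter Topology MeasureTheory
open scoped ENNReal

/-- The countable Markov shift over alphabet ℕ determined by the 0-1 matrix `A`. -/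
def MarkovShift (A : ℕ → ℕ → Bool) : Type :=
  {x : ℕ → ℕ // ∀ i, A (x i) (x (i + 1)) = true}

namespace MarkovShift

variable {A : ℕ → ℕ → Bool}

instance : TopologicalSpace (MarkovShift A) :=
  instTopologicalSpaceSubtype

instance : MeasurableSpace (MarkovShift A) := borel _

instance : BorelSpace (MarkovShift A) := ⟨rfl⟩

/-- The shift map. -/
def shift (x : MarkovShift A) : MarkovShift A :=
  ⟨fun n => x.1 (n + 1), fun i => x.2 (i + 1)⟩

/-- The cylinder set determined by a finite word. -/
def cylinder (w : List ℕ) : Set (MarkovShift A) :=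
  {x | ∀ i : Fin w.length, x.1 i = w.get i}

/-- The cylinder set determined by the first `m` coordinates of `x`. -/
def cylOf (x : MarkovShift A) (m : ℕ) : Set (MarkovShift A) :=
  {y | ∀ i < m, y.1 i = x.1 i}

/-- A symbol is admissible when its cylinder is nonempty. -/
def Admissible (A : ℕ → ℕ → Bool) (a : ℕ) : Prop :=
  ∃ x : MarkovShift A, x.1 0 = a

/-- Topologically mixing. -/
def TopologicallyMixing (A : ℕ → ℕ → Bool) : Prop :=
  ∀ a b : ℕ, Admissible A a → Admissible A b →
    ∃ N : ℕ, ∀ n ≥ N, ∃ x : MarkovShift A, x.1 0 = a ∧ (shift^[n] x).1 0 = b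

/-- Finitely primitive (BIP). -/
def FinitelyPrimitive (A : ℕ → ℕ → Bool) : Prop :=
  ∃ (K₀ : ℕ) (F : Finset ℕ), ∀ a b : ℕ, Admissible A a → Admissible A b →
    ∃ w : List ℕ, w.length = K₀ ∧ (∀ c ∈ w, c ∈ F) ∧
      List.Chain' (fun u v => A u v = true) (a :: (w ++ [b]))

/-- First coordinate where two distinct points disagree. -/
noncomputable def firstDiff (x y : MarkovShift A) (h : x ≠ y) : ℕ :=
  Nat.find (Function.ne_iff.mp (fun hxy : x.1 = y.1 => h (Subtype.ext hxy)))

open Classical in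
/-- The metric `d(x,y) = r^{t(x,y)}`. -/
noncomputable def dist' (r : ℝ) (x y : MarkovShift A) : ℝ :=
  if h : x = y then 0 else r ^ firstDiff x y h

/-- Birkhoff sum `S_n f`. -/
def birkhoff (f : MarkovShift A → ℝ) (n : ℕ) (x : MarkovShift A) : ℝ :=
  ∑ j ∈ Finset.range n, f (shift^[j] x)

/-- The set of values `|S_n f x - S_n f y|` over pairs agreeing on the first `m` coordinates. -/
def varSet (f : MarkovShift A → ℝ) (n m : ℕ) : Set ℝ :=
  {c | ∃ x y : MarkovShift A, (∀ i < m, x.1 i = y.1 i) ∧ c = |birkhoff f n x - birkhoff f n y|}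

/-- `Var_m (S_n f)`. -/
noncomputable def varBirk (f : MarkovShift A → ℝ) (n m : ℕ) : ℝ := sSup (varSet f n m)

/-- `Var_1 f < ∞`. -/
def Var1Finite (f : MarkovShift A → ℝ) : Prop := BddAbove (varSet f 1 1)

/-- The set whose supremum is `sup_{n ≥ 1} Var_{n+k}(S_n f)`. -/
def waltersSet (f : MarkovShift A → ℝ) (k : ℕ) : Set ℝ :=
  {c | ∃ n, 1 ≤ n ∧ c ∈ varSet f n (n + k)}

/-- `M_k = sup_{n ≥ 1} Var_{n+k}(S_n f)`. -/
noncomputable def waltersSup (f : MarkovShift A → ℝ) (k : ℕ) : ℝ := sSup (waltersSet f k)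

/-- The Walters condition. -/
def SatisfiesWalters (f : MarkovShift A → ℝ) : Prop :=
  (∀ k, 1 ≤ k → BddAbove (waltersSet f k)) ∧
    Tendsto (fun k => waltersSup f k) atTop (𝓝 0)

/-- The partition function `Z_n(f,a) = Σ_{σ^n x = x, x₀ = a} e^{S_n f (x)}`. -/
noncomputable def partitionSum (f : MarkovShift A → ℝ) (n : ℕ) (a : ℕ) : ℝ :=
  ∑' x : {x : MarkovShift A // shift^[n] x = x ∧ x.1 0 = a}, Real.exp (birkhoff f n x.1)

/-- `f` has (finite) Gurevich pressure `p`. -/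
def HasGurevichPressure (f : MarkovShift A → ℝ) (p : ℝ) : Prop :=
  ∀ a : ℕ, Admissible A a →
    (∀ n, 1 ≤ n → Summable fun x : {x : MarkovShift A // shift^[n] x = x ∧ x.1 0 = a} =>
        Real.exp (birkhoff f n x.1)) ∧
    Tendsto (fun n : ℕ => (1 / (n : ℝ)) * Real.log (partitionSum f n a)) atTop (𝓝 p)

/-- σ-invariant Borel probability measure. -/
def IsInvariantProb (μ : Measure (MarkovShift A)) : Prop :=
  IsProbabilityMeasure μ ∧ μ.map shift = μ

/-- `m(f)`, the maximal ergodic average. -/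
noncomputable def mf (f : MarkovShift A → ℝ) : ℝ :=
  sSup {c | ∃ μ : Measure (MarkovShift A),
    IsInvariantProb μ ∧ Integrable f μ ∧ ∫ x, f x ∂μ = c}

/-- A maximizing measure for `f`. -/
def IsMaximizing (f : MarkovShift A → ℝ) (μ : Measure (MarkovShift A)) : Prop :=
  IsInvariantProb μ ∧ Integrable f μ ∧ ∫ x, f x ∂μ = mf f

/-- Bounded real valued function. -/
def BoundedFun (g : MarkovShift A → ℝ) : Prop := ∃ C, ∀ x, |g x| ≤ C

/-- A bounded calibrated sub-action for `f`. -/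
def IsCalibratedSubaction (f V : MarkovShift A → ℝ) : Prop :=
  Continuous V ∧ BoundedFun V ∧
    (∀ x, f x + V x - V (shift x) - mf f ≤ 0) ∧
    (∀ y, ∃ x, shift x = y ∧ f x + V x - V (shift x) - mf f = 0)

/-- The Ruelle transfer operator `(L_g u)(x) = Σ_{σ y = x} e^{g(y)} u(y)`. -/
noncomputable def ruelle (g u : MarkovShift A → ℝ) (x : MarkovShift A) : ℝ :=
  ∑' y : {y : MarkovShift A // shift y = x}, Real.exp (g y.1) * u y.1

/-- Ruelle-Perron-Frobenius data for the potential `f` with pressure `p`: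
eigenfunction `h`, eigenmeasure `ν`. -/
def IsRPF (f : MarkovShift A → ℝ) (p : ℝ) (h : MarkovShift A → ℝ)
    (ν : Measure (MarkovShift A)) : Prop :=
  Continuous h ∧ (∀ x, 0 < h x) ∧
    (∀ x, ruelle f h x = Real.exp p * h x) ∧
    IsProbabilityMeasure ν ∧
    (∀ g : MarkovShift A → ℝ, Continuous g → BoundedFun g →
      ∫ x, ruelle f g x ∂ν = Real.exp p * ∫ x, g x ∂ν) ∧
    ∫ x, h x ∂ν = 1

/-- The Gibbs measure `dμ = h dν`. -/
noncomputable def gibbs (h : MarkovShift A → ℝ) (ν : Measure (MarkovShift A)) :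
    Measure (MarkovShift A) :=
  ν.withDensity fun x => ENNReal.ofReal (h x)

/-- The Mañé potential `S_f(x,y)` (with respect to the metric of parameter `r`). -/
noncomputable def manePot (r : ℝ) (f : MarkovShift A → ℝ) (x y : MarkovShift A) : EReal :=
  ⨅ ε : {ε : ℝ // 0 < ε}, ⨆ n : {n : ℕ // 1 ≤ n},
    ⨆ _z : {z : MarkovShift A // dist' r x z < ε.1 ∧ shift^[n.1] z = y},
      ((birkhoff (fun w => f w - mf f) n.1 _z.1 : ℝ) : EReal)

/-- The (topological) support of a measure. -/
def msupport (μ : Measure (MarkovShift A)) : Set (MarkovShift A) :=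
  {x | ∀ U : Set (MarkovShift A), IsOpen U → x ∈ U → 0 < μ U}

end MarkovShift

/-!
The normalized potential `g = f + V - V ∘ σ - m(f)` is nonpositive and its Birkhoff sums differ
from those of `f - m(f)` by a coboundary. Hence the Mañé potential satisfies
`S_f(x, y) ≤ V y - V x + g x`, so `S_f(x, x) = 0` forces `g x = 0`; as this return property passes
from `x` to `σ x`, the function `g` vanishes along the whole orbit of `x`.

Conversely, suppose that `g` vanishes along the orbits of `x` and `y`. Calibration extends `y` to a
backward orbit along which `g` vanishes. By BIP, `Var₁ f < ∞` and finite pressure, each superlevel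
set of `f` involves finitely many first symbols, so such points form a compact set. The limit sets
of the forward orbit of `x` and of the backward orbit of `y` each carry an invariant measure with
`g = 0` almost everywhere, that is, a maximizing measure. By uniqueness the two limit sets meet.
Gluing an initial piece of the orbit of `x` to a final piece of the backward orbit of `y` near a
common limit point gives, by the Walters condition, `S_f(x, y) ≥ V y - V x`.
-/

section InvariantMeasure

variable {X : Type*} [MeasurableSpace X]

/-- The empirical measure of the first `n` points of the orbit of `x` under `T`, used in the
Krylov–Bogoliubov argument. For `n = 0` it is the zero measure, since `∞ • 0 = 0`. -/
noncomputable def orbitMeasure (T : X → X) (x : X) (n : ℕ) : Measure X :=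
  (n : ℝ≥0∞)⁻¹ • ∑ j ∈ Finset.range n, Measure.dirac (T^[j] x)

theorem isProbabilityMeasure_orbitMeasure (T : X → X) (x : X) {n : ℕ} (hn : n ≠ 0) :
    IsProbabilityMeasure (orbitMeasure T x n) where
  measure_univ := by
    simpa [orbitMeasure] using
      ENNReal.inv_mul_cancel (Nat.cast_ne_zero.2 hn) (ENNReal.natCast_ne_top n)

theorem integral_orbitMeasure {E : Type*} [NormedAddCommGroup E] [NormedSpace ℝ E]
    [CompleteSpace E] (T : X → X) (x : X) (n : ℕ) {φ : X → E} (hφ : StronglyMeasurable φ) :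
    ∫ y, φ y ∂orbitMeasure T x n = birkhoffAverage ℝ T φ n x := by
  rw [orbitMeasure, integral_smul_measure,
    integral_finsetSum_measure fun j _ => integrable_dirac' hφ enorm_lt_top]
  simp only [integral_dirac' _ _ hφ, birkhoffAverage, birkhoffSum, ENNReal.toReal_inv,
    ENNReal.toReal_natCast]

theorem integral_const_add_coboundary {μ : Measure X} [IsProbabilityMeasure μ] {T : X → X}
    (hT : MeasurePreserving T μ μ) {V : X → ℝ} (hV : Integrable V μ) (c : ℝ) :
    ∫ x, (c + (V (T x) - V x)) ∂μ = c := by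
  have hVT : Integrable (fun x => V (T x)) μ := hT.integrable_comp_of_integrable hV
  have hVT_sub : Integrable (fun x => V (T x) - V x) μ := hVT.sub hV
  have h_eq : ∫ x, V (T x) ∂μ = ∫ x, V x ∂μ := by
    conv_rhs => rw [← hT.map_eq]
    exact (integral_map hT.aemeasurable (hT.map_eq.symm ▸ hV.aestronglyMeasurable)).symm
  rw [integral_add (integrable_const c) hVT_sub, integral_sub hVT hV, h_eq]
  simp

variable [TopologicalSpace X] [BorelSpace X]

theorem map_eq_of_tendsto_integral_orbitMeasure [HasOuterApproxClosed X] {T : X → X}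
    (hT : Continuous T) {x : X} {l : Filter ℕ} [l.NeBot] (hl : l ≤ atTop) {ν : Measure X}
    [IsFiniteMeasure ν]
    (hν : ∀ φ : BoundedContinuousFunction X ℝ,
      Tendsto (fun n => ∫ y, φ y ∂orbitMeasure T x n) l (𝓝 (∫ y, φ y ∂ν))) :
    ν.map T = ν := by
  refine ext_of_forall_integral_eq_of_IsFiniteMeasure fun φ => ?_
  have h_comp (n : ℕ) : birkhoffAverage ℝ T (φ ∘ T) n x = birkhoffAverage ℝ T φ n (T x) := by
    simp only [birkhoffAverage, birkhoffSum, Function.comp_apply,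
      ← Function.iterate_succ_apply, ← Function.iterate_succ_apply' T]
  have h_average : Tendsto (fun n => birkhoffAverage ℝ T (φ ∘ T) n x -
      birkhoffAverage ℝ T φ n x) l (𝓝 0) := by
    simpa only [h_comp] using
      (tendsto_birkhoffAverage_apply_sub_birkhoffAverage' ℝ φ.isBounded_range T x).mono_left hl
  have h_integral := (hν (φ.compContinuous ⟨T, hT⟩)).sub (hν φ)
  simp only [integral_orbitMeasure T x _
    (BoundedContinuousFunction.continuous _).stronglyMeasurable] at h_integral
  rw [integral_map hT.aemeasurable φ.continuous.stronglyMeasurable.aestronglyMeasurable,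
    ← sub_eq_zero]
  exact tendsto_nhds_unique h_integral h_average

theorem exists_measurePreserving_of_compactSpace [HasOuterApproxClosed X] [T2Space X]
    [CompactSpace X] [Nonempty X] {T : X → X} (hT : Continuous T) :
    ∃ ν : Measure X, IsProbabilityMeasure ν ∧ MeasurePreserving T ν ν := by
  let x := Classical.arbitrary X
  let P (n : ℕ) : ProbabilityMeasure X :=
    ⟨orbitMeasure T x (n + 1), isProbabilityMeasure_orbitMeasure T x n.succ_ne_zero⟩
  obtain ⟨ν, -, hν⟩ := isCompact_univ.ultrafilter_le_nhds ((hyperfilter ℕ).map P) (by simp)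
  have hν' : Tendsto P (hyperfilter ℕ) (𝓝 ν) := hν
  have h_atTop : map (· + 1) (hyperfilter ℕ : Filter ℕ) ≤ atTop :=
    (tendsto_add_atTop_nat 1).mono_left Nat.hyperfilter_le_atTop
  exact ⟨ν, inferInstance, hT.measurable, map_eq_of_tendsto_integral_orbitMeasure hT h_atTop
    fun φ => tendsto_map'_iff.2 <|
      ProbabilityMeasure.tendsto_iff_forall_integral_tendsto.1 hν' φ⟩

theorem exists_measurePreserving_ae_mem_of_isCompact [TopologicalSpace.MetrizableSpace X]
    {T : X → X} (hT : Continuous T) {C : Set X} (hC : IsCompact C) (hne : C.Nonempty)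
    (hTC : Set.MapsTo T C C) :
    ∃ ν : Measure X, IsProbabilityMeasure ν ∧ MeasurePreserving T ν ν ∧ ∀ᵐ x ∂ν, x ∈ C := by
  have : CompactSpace C := isCompact_iff_compactSpace.1 hC
  have : Nonempty C := hne.to_subtype
  obtain ⟨μ, hμ, hμT⟩ := exists_measurePreserving_of_compactSpace
    (hT.continuousOn.mapsToRestrict hTC)
  have hval : Measurable (Subtype.val : C → X) := measurable_subtype_coe
  refine ⟨μ.map Subtype.val, Measure.isProbabilityMeasure_map hval.aemeasurable,
    ⟨hT.measurable, ?_⟩, (ae_map_iff hval.aemeasurable hC.measurableSet).2 (.of_forall (·.2))⟩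
  conv_rhs => rw [← hμT.map_eq, Measure.map_map hval hμT.measurable]
  rw [Measure.map_map hT.measurable hval]
  rfl

end InvariantMeasure

theorem mapClusterPt_apply_of_eventuallyEq {X ι : Type*} [TopologicalSpace X] {T : X → X}
    {l : Filter ι} {u : ι → X} {φ : ι → ι} {p : X} (hT : ContinuousAt T p)
    (hφ : Tendsto φ l l) (hu : T ∘ u =ᶠ[l] u ∘ φ) (hp : MapClusterPt p l u) :
    MapClusterPt (T p) l u :=
  .of_comp hφ (hu.mapClusterPt_iff.1 (hp.continuousAt_comp hT))

theorem exists_backward_orbit_of_surjOn {X : Type*} {T : X → X} {Z : Set X}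
    (hT : Set.SurjOn T Z Z) {x : X} (hx : x ∈ Z) :
    ∃ u : ℕ → X, u 0 = x ∧ (∀ k, u k ∈ Z) ∧ ∀ k, T (u (k + 1)) = u k := by
  have : Nonempty X := ⟨x⟩
  have h_mem (k : ℕ) : (Function.invFunOn T Z)^[k] x ∈ Z := hT.mapsTo_invFunOn.iterate k hx
  refine ⟨fun k => (Function.invFunOn T Z)^[k] x, rfl, h_mem, fun k => ?_⟩
  simp only [Function.iterate_succ_apply']
  exact hT.rightInvOn_invFunOn (h_mem k)

theorem iterate_apply_backward_orbit {X : Type*} {T : X → X} {u : ℕ → X}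
    (hu : ∀ k, T (u (k + 1)) = u k) (k : ℕ) : T^[k] (u k) = u 0 := by
  induction k with
  | zero => rfl
  | succ k ih => rw [Function.iterate_succ_apply, hu, ih]

theorem ereal_coe_le_iff_forall_sub_lt {c : ℝ} {a : EReal} :
    (c : EReal) ≤ a ↔ ∀ δ > 0, ((c - δ : ℝ) : EReal) < a := by
  refine ⟨fun h δ hδ => (EReal.coe_lt_coe_iff.2 (sub_lt_self c hδ)).trans_le h, fun h => ?_⟩
  refine EReal.ge_of_forall_gt_iff_ge.1 fun b hb => ?_
  simpa using (h (c - b) (sub_pos.2 (EReal.coe_lt_coe_iff.1 hb))).le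

namespace MarkovShift

variable {A : ℕ → ℕ → Bool} {f V : MarkovShift A → ℝ} {r : ℝ} {x y : MarkovShift A}

theorem shift_iterate_apply (n : ℕ) (x : MarkovShift A) (i : ℕ) :
    (shift^[n] x).1 i = x.1 (i + n) := by
  induction n generalizing i with
  | zero => rfl
  | succ n ih =>
    rw [Function.iterate_succ_apply', ← add_assoc, add_right_comm, ← ih]
    rfl

theorem shift_iterate_apply_zero (n : ℕ) (x : MarkovShift A) : (shift^[n] x).1 0 = x.1 n := by
  rw [shift_iterate_apply, zero_add]

theorem isClosedEmbedding_val : IsClosedEmbedding fun x : MarkovShift A => x.1 := by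
  refine ⟨IsEmbedding.subtypeVal, ?_⟩
  have h_closed (i : ℕ) : IsClosed {x : ℕ → ℕ | A (x i) (x (i + 1)) = true} := by
    have h_pair : Continuous fun x : ℕ → ℕ => (x i, x (i + 1)) := by fun_prop
    exact (isClosed_discrete {q : ℕ × ℕ | A q.1 q.2 = true}).preimage h_pair
  have h_range : Set.range (fun x : MarkovShift A => x.1) =
      ⋂ i, {x : ℕ → ℕ | A (x i) (x (i + 1)) = true} := by
    ext x
    simp only [Set.mem_range, Set.mem_iInter, Set.mem_ofPred_eq]
    exact ⟨fun ⟨y, hy⟩ => hy ▸ y.2, fun hx => ⟨⟨x, hx⟩, rfl⟩⟩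
  exact h_range ▸ isClosed_iInter h_closed

instance : TopologicalSpace.MetrizableSpace (MarkovShift A) :=
  isClosedEmbedding_val.isEmbedding.metrizableSpace

theorem continuous_val_apply (i : ℕ) : Continuous fun x : MarkovShift A => x.1 i :=
  (continuous_apply i).comp isClosedEmbedding_val.continuous

theorem continuous_shift : Continuous (shift : MarkovShift A → MarkovShift A) :=
  isClosedEmbedding_val.isEmbedding.continuous_iff.2
    (continuous_pi fun i => continuous_val_apply (i + 1))

theorem isCompact_setOf_forall_apply_mem {F : Set ℕ} (hF : F.Finite) :
    IsCompact {x : MarkovShift A | ∀ i, x.1 i ∈ F} := by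
  have h_preimage : {x : MarkovShift A | ∀ i, x.1 i ∈ F} =
      (fun x => x.1) ⁻¹' Set.univ.pi fun _ => F := by ext x; simp
  rw [h_preimage]
  exact isClosedEmbedding_val.isCompact_preimage (isCompact_univ_pi fun _ => hF.isCompact)

theorem cylOf_antitone (x : MarkovShift A) : Antitone (cylOf x) :=
  fun _ _ hmn _ hy i hi => hy i (hi.trans_le hmn)

theorem nhds_hasBasis_cylOf (x : MarkovShift A) :
    (𝓝 x).HasBasis (fun _ => True) (cylOf x) := by
  refine ⟨fun s => ⟨fun hs => ?_, fun ⟨N, _, hN⟩ => mem_of_superset ?_ hN⟩⟩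
  · rw [isClosedEmbedding_val.isInducing.nhds_eq_comap x, nhds_pi] at hs
    simp only [nhds_discrete] at hs
    obtain ⟨I, hI, hIs⟩ := mem_pi_pure.1 (mem_comap'.1 hs)
    obtain ⟨N, hN⟩ := hI.bddAbove
    exact ⟨N + 1, trivial, fun y hy =>
      hIs _ (fun i hi => hy i (Nat.lt_succ_of_le (hN hi))) rfl⟩
  · exact (eventually_all_finite (Set.finite_Iio N)).2 fun i _ =>
      (continuous_val_apply i).continuousAt.eventually (isOpen_discrete {x.1 i} |>.mem_nhds rfl)

theorem cylOf_mem_nhds (x : MarkovShift A) (N : ℕ) : cylOf x N ∈ 𝓝 x :=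
  (nhds_hasBasis_cylOf x).mem_of_mem trivial

theorem dist'_lt_pow_iff (hr0 : 0 < r) (hr1 : r < 1) {N : ℕ} :
    dist' r x y < r ^ N ↔ y ∈ cylOf x (N + 1) := by
  by_cases hxy : x = y
  · subst hxy
    simp [dist', cylOf, pow_pos hr0]
  · rw [dist', dif_neg hxy, pow_lt_pow_iff_right_of_lt_one₀ hr0 hr1, firstDiff, Nat.lt_find_iff]
    simp only [ne_eq, not_not, cylOf, Set.mem_ofPred_eq, Nat.lt_succ_iff, eq_comm]

theorem nhds_hasBasis_dist' (hr0 : 0 < r) (hr1 : r < 1) (x : MarkovShift A) :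
    (𝓝 x).HasBasis (fun ε : ℝ => 0 < ε) fun ε => {y | dist' r x y < ε} := by
  refine (nhds_hasBasis_cylOf x).to_hasBasis (fun N _ => ⟨r ^ N, pow_pos hr0 N, fun y hy => ?_⟩)
    fun ε hε => ?_
  · exact cylOf_antitone x N.le_succ ((dist'_lt_pow_iff hr0 hr1).1 hy)
  · obtain ⟨N, hN⟩ := exists_pow_lt_of_lt_one hε hr1
    exact ⟨N + 1, trivial, fun y hy => ((dist'_lt_pow_iff hr0 hr1).2 hy).trans hN⟩

theorem exists_mem_cylOf_shift_iterate_eq {n m : ℕ} (hm : m ≠ 0)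
    (hy : y ∈ cylOf (shift^[n] x) m) : ∃ z ∈ cylOf x (n + m), shift^[n] z = y := by
  have hy' (i : ℕ) (hi : i < m) : y.1 i = x.1 (i + n) := by rw [hy i hi, shift_iterate_apply]
  let z (i : ℕ) : ℕ := if i < n then x.1 i else y.1 (i - n)
  have hz_lt (i : ℕ) (hi : i < n + m) : z i = x.1 i := by
    by_cases h : i < n
    · exact if_pos h
    · rw [← Nat.sub_add_cancel (not_lt.1 h), ← hy' _ (by lia)]
      simp [z]
  have hz_add (i : ℕ) : z (i + n) = y.1 i := by simp [z]
  have hz (i : ℕ) : A (z i) (z (i + 1)) = true := by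
    by_cases h : i < n
    · rw [hz_lt i (by lia), hz_lt (i + 1) (by lia)]
      exact x.2 i
    · rw [← Nat.sub_add_cancel (not_lt.1 h), add_right_comm, hz_add, hz_add]
      exact y.2 _
  exact ⟨⟨z, hz⟩, hz_lt,
    Subtype.ext <| funext fun i => (shift_iterate_apply n _ i).trans (hz_add i)⟩

theorem exists_periodic_of_isChain {a : ℕ} {l : List ℕ}
    (hl : List.IsChain (fun u v => A u v = true) (a :: l ++ [a])) :
    ∃ x : MarkovShift A, shift^[l.length + 1] x = x ∧
      ∀ i, x.1 i = (a :: l)[i % (l.length + 1)]'(Nat.mod_lt i l.length.succ_pos) := by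
  have hmod (i : ℕ) : i % (l.length + 1) < l.length + 1 := Nat.mod_lt i l.length.succ_pos
  have h_next (i : ℕ) : (a :: l ++ [a])[i % (l.length + 1) + 1]'(by have := hmod i; simp; lia) =
      (a :: l)[(i + 1) % (l.length + 1)]'(hmod (i + 1)) := by
    rcases (Nat.add_one_le_of_lt (hmod i)).lt_or_eq with h | h
    · rw [List.getElem_append_left h]
      simp only [← Nat.mod_add_mod i, Nat.mod_eq_of_lt h]
    · have h0 : (i + 1) % (l.length + 1) = 0 := by rw [← Nat.mod_add_mod, h, Nat.mod_self]
      rw [List.getElem_append_right h.ge]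
      simp [h0]
  refine ⟨⟨fun i => (a :: l)[i % (l.length + 1)]'(hmod i), fun i => ?_⟩, ?_, fun _ => rfl⟩
  · have := List.isChain_iff_getElem.1 hl (i % (l.length + 1)) (by have := hmod i; simp; lia)
    rwa [h_next, List.getElem_append_left (hmod i)] at this
  · refine Subtype.ext (funext fun i => (shift_iterate_apply _ _ _).trans ?_)
    simp

theorem FinitelyPrimitive.exists_loop (hA : FinitelyPrimitive A) :
    ∃ (K : ℕ) (F : Finset ℕ), ∀ a b, Admissible A a → Admissible A b →
      ∃ x : MarkovShift A, shift^[2 * K + 2] x = x ∧ x.1 0 = a ∧ x.1 (K + 1) = b ∧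
        ∀ i, x.1 i = b ∨ x.1 i ∈ insert a F := by
  obtain ⟨K, F, hKF⟩ := hA
  refine ⟨K, F, fun a b ha hb => ?_⟩
  obtain ⟨w, hwK, hwF, hw⟩ := hKF a b ha hb
  obtain ⟨w', hwK', hwF', hw'⟩ := hKF b a hb ha
  have h_chain : List.IsChain (fun u v => A u v = true) (a :: (w ++ b :: w') ++ [a]) := by
    simpa using (List.isChain_split (l₁ := a :: w) (l₂ := w' ++ [a])).2 ⟨hw, hw'⟩
  have h_length : (w ++ b :: w').length + 1 = 2 * K + 2 := by simp; lia
  obtain ⟨x, hx_per, hx⟩ := exists_periodic_of_isChain h_chain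
  refine ⟨x, h_length ▸ hx_per, by simp [hx], ?_, fun i => ?_⟩
  · have h_mod : (K + 1) % ((w ++ b :: w').length + 1) = K + 1 :=
      Nat.mod_eq_of_lt (by lia)
    simp only [hx, h_mod]
    simp [hwK]
  · have h_mem : x.1 i ∈ a :: (w ++ b :: w') := hx i ▸ List.getElem_mem _
    simp only [List.mem_cons, List.mem_append] at h_mem
    rw [Finset.mem_insert]
    rcases h_mem with h | h | h | h
    · exact .inr (.inl h)
    · exact .inr (.inr (hwF _ h))
    · exact .inl h
    · exact .inr (.inr (hwF' _ h))

theorem birkhoff_add (f : MarkovShift A → ℝ) (m n : ℕ) (x : MarkovShift A) :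
    birkhoff f (m + n) x = birkhoff f m x + birkhoff f n (shift^[m] x) :=
  birkhoffSum_add shift f m n x

theorem birkhoff_shift (f : MarkovShift A → ℝ) (n : ℕ) (x : MarkovShift A) :
    birkhoff f n (shift x) = birkhoff f n x + (f (shift^[n] x) - f x) :=
  eq_add_of_sub_eq' (birkhoffSum_apply_sub_birkhoffSum shift f n x)

theorem birkhoff_sub_const (f : MarkovShift A → ℝ) (c : ℝ) (n : ℕ) (x : MarkovShift A) :
    birkhoff (fun w => f w - c) n x = birkhoff f n x - n * c := by
  simp [birkhoff]

theorem SatisfiesWalters.exists_abs_birkhoff_sub_lt (hf : SatisfiesWalters f) {δ : ℝ}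
    (hδ : 0 < δ) :
    ∃ k, ∀ n x, ∀ y ∈ cylOf x (n + k), |birkhoff f n y - birkhoff f n x| < δ := by
  obtain ⟨k, hkδ, hk⟩ := ((hf.2.eventually (gt_mem_nhds hδ)).and (eventually_ge_atTop 1)).exists
  refine ⟨k, fun n x y hy => ?_⟩
  rcases n.eq_zero_or_pos with rfl | hn
  · simpa [birkhoff] using hδ
  · exact (le_csSup (hf.1 k hk) ⟨n, hn, y, x, hy, rfl⟩).trans_lt hkδ

theorem SatisfiesWalters.continuous (hf : SatisfiesWalters f) : Continuous f := by
  refine continuous_iff_continuousAt.2 fun x => Metric.tendsto_nhds.2 fun ε hε => ?_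
  obtain ⟨k, hk⟩ := hf.exists_abs_birkhoff_sub_lt hε
  filter_upwards [cylOf_mem_nhds x (1 + k)] with y hy
  simpa [birkhoff, Real.dist_eq] using hk 1 x y hy

theorem Var1Finite.exists_abs_sub_le (hf : Var1Finite f) :
    ∃ D, ∀ x y : MarkovShift A, x.1 0 = y.1 0 → |f x - f y| ≤ D := by
  obtain ⟨D, hD⟩ := hf
  exact ⟨D, fun x y hxy => by simpa [birkhoff] using hD ⟨x, y, by simpa using hxy, rfl⟩⟩

theorem Var1Finite.bddBelow_image (hf : Var1Finite f) {F : Set ℕ} (hF : F.Finite) :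
    BddBelow (f '' {x | x.1 0 ∈ F}) := by
  have h_union : {x : MarkovShift A | x.1 0 ∈ F} = ⋃ a ∈ F, {x | x.1 0 = a} := by ext x; simp
  rw [h_union, Set.image_iUnion₂, hF.bddBelow_biUnion]
  intro a _
  obtain ⟨D, hD⟩ := hf.exists_abs_sub_le
  rcases Set.eq_empty_or_nonempty {x : MarkovShift A | x.1 0 = a} with h | ⟨x, hx⟩
  · simp [h]
  · refine ⟨f x - D, ?_⟩
    rintro _ ⟨y, hy, rfl⟩
    linarith [(abs_le.1 (hD x y (Eq.trans hx (Eq.symm hy)))).2]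

/-- A potential is coercive when it tends to `-∞` as the first symbol escapes every finite set,
i.e. each of its superlevel sets meets finitely many cylinders of length one. It replaces
compactness of the alphabet. -/
def IsCoercive (f : MarkovShift A → ℝ) : Prop :=
  ∀ c, ((fun x : MarkovShift A => x.1 0) '' {x | c ≤ f x}).Finite

theorem isCoercive_of_summable (hA : FinitelyPrimitive A) (hf : Var1Finite f)
    (hsum : ∀ a, Admissible A a → ∀ n, 1 ≤ n →
      Summable fun x : {x : MarkovShift A // shift^[n] x = x ∧ x.1 0 = a} =>
        Real.exp (birkhoff f n x.1)) :
    IsCoercive f := by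
  intro c
  by_contra h_infinite
  have : Infinite ((fun x : MarkovShift A => x.1 0) '' {x | c ≤ f x}) :=
    Set.infinite_coe_iff.2 h_infinite
  obtain ⟨_, x₀, -, rfl⟩ := Set.Infinite.nonempty h_infinite
  obtain ⟨K, F, hKF⟩ := hA.exists_loop
  obtain ⟨D, hD⟩ := hf.exists_abs_sub_le
  obtain ⟨M, hM⟩ := hf.bddBelow_image (insert (x₀.1 0) F).finite_toSet
  have h_loop (b : (fun x : MarkovShift A => x.1 0) '' {x | c ≤ f x}) :
      ∃ x : {x : MarkovShift A // shift^[2 * K + 2] x = x ∧ x.1 0 = x₀.1 0},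
        x.1.1 (K + 1) = b ∧ (2 * K + 2) • min M (c - D) ≤ birkhoff f (2 * K + 2) x.1 := by
    obtain ⟨_, y, hy : c ≤ f y, rfl⟩ := b
    obtain ⟨x, hx_periodic, hx_zero, hxK, hx⟩ := hKF _ _ ⟨x₀, rfl⟩ ⟨y, rfl⟩
    have h_le (i : ℕ) : min M (c - D) ≤ f (shift^[i] x) := by
      have hx_iterate := hx i
      rw [← shift_iterate_apply_zero] at hx_iterate
      rcases hx_iterate with h | h
      · exact (min_le_right _ _).trans (by linarith [(abs_le.1 (hD y _ h.symm)).2])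
      · exact (min_le_left _ _).trans (hM ⟨_, h, rfl⟩)
    have h_sum := Finset.card_nsmul_le_sum (Finset.range (2 * K + 2)) _ _ fun i _ => h_le i
    exact ⟨⟨x, hx_periodic, hx_zero⟩, hxK, by rwa [Finset.card_range] at h_sum⟩
  choose g hgK hg using h_loop
  have hg_injective : Function.Injective g := fun b b' h =>
    Subtype.ext <| by rw [← hgK b, ← hgK b', h]
  have h_const := Summable.of_nonneg_of_le (fun _ => (Real.exp_pos _).le)
    (fun b => Real.exp_le_exp.2 (hg b))
    ((hsum _ ⟨x₀, rfl⟩ (2 * K + 2) (by lia)).comp_injective hg_injective)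
  exact (Real.exp_pos _).ne' ((summable_const_iff _).1 h_const)

/-- The normalized potential `f + V - V ∘ σ - m(f)`. It is cohomologous to `f - m(f)`, and it is
nonpositive exactly when `V` is a sub-action for `f`. -/
noncomputable def normalizedPotential (f V : MarkovShift A → ℝ) (x : MarkovShift A) : ℝ :=
  f x + V x - V (shift x) - mf f

theorem continuous_normalizedPotential (hf : Continuous f) (hV : Continuous V) :
    Continuous (normalizedPotential f V) :=
  ((hf.add hV).sub (hV.comp continuous_shift)).sub continuous_const

theorem birkhoff_normalizedPotential (f V : MarkovShift A → ℝ) (n : ℕ) (x : MarkovShift A) :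
    birkhoff (normalizedPotential f V) n x =
      birkhoff (fun w => f w - mf f) n x + V x - V (shift^[n] x) := by
  induction n with
  | zero => simp [birkhoff]
  | succ n ih =>
    rw [birkhoff_add, birkhoff_add, ih, Function.iterate_succ_apply']
    simp [birkhoff, normalizedPotential]
    ring

/-- The zero set of the deviation function `-∑ⱼ (f + V - V ∘ σ - m(f)) ∘ σʲ` when `V` is a
sub-action for `f`: the points along whose forward orbit the normalized potential vanishes. -/
def zeroDeviationSet (f V : MarkovShift A → ℝ) : Set (MarkovShift A) :=
  {x | ∀ j, normalizedPotential f V (shift^[j] x) = 0}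

theorem tsum_ofReal_neg_normalizedPotential_eq_zero_iff (h : ∀ x, normalizedPotential f V x ≤ 0) :
    ∑' j, ENNReal.ofReal (-normalizedPotential f V (shift^[j] x)) = 0 ↔
      x ∈ zeroDeviationSet f V := by
  simp only [ENNReal.tsum_eq_zero, ENNReal.ofReal_eq_zero, neg_nonpos]
  exact forall_congr' fun j => ⟨(h _).antisymm, Eq.ge⟩

theorem mapsTo_shift_zeroDeviationSet (f V : MarkovShift A → ℝ) :
    Set.MapsTo shift (zeroDeviationSet f V) (zeroDeviationSet f V) :=
  fun _ hx j => hx (j + 1)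

theorem surjOn_shift_zeroDeviationSet
    (h : ∀ y, ∃ x, shift x = y ∧ normalizedPotential f V x = 0) :
    Set.SurjOn shift (zeroDeviationSet f V) (zeroDeviationSet f V) := by
  intro y hy
  obtain ⟨x, rfl, hx⟩ := h y
  exact ⟨x, Nat.rec hx fun j _ => hy j, rfl⟩

theorem birkhoff_eq_sub_of_mem_zeroDeviationSet (hx : x ∈ zeroDeviationSet f V) (n : ℕ) :
    birkhoff (fun w => f w - mf f) n x = V (shift^[n] x) - V x := by
  have h_zero : birkhoff (normalizedPotential f V) n x = 0 := Finset.sum_eq_zero fun j _ => hx j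
  rw [birkhoff_normalizedPotential] at h_zero
  linarith

theorem isClosed_zeroDeviationSet (hf : Continuous f) (hV : Continuous V) :
    IsClosed (zeroDeviationSet f V) := by
  have h_inter : zeroDeviationSet f V = ⋂ j, {x | normalizedPotential f V (shift^[j] x) = 0} := by
    ext x
    simp [zeroDeviationSet]
  rw [h_inter]
  exact isClosed_iInter fun j => isClosed_eq
    ((continuous_normalizedPotential hf hV).comp (continuous_shift.iterate j)) continuous_const

theorem isCompact_zeroDeviationSet (h_coercive : IsCoercive f) (hf : Continuous f)
    (hV : Continuous V) (h_bdd : BoundedFun V) : IsCompact (zeroDeviationSet f V) := by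
  obtain ⟨C, hC⟩ := h_bdd
  refine (isCompact_setOf_forall_apply_mem (h_coercive (mf f - 2 * C))).of_isClosed_subset
    (isClosed_zeroDeviationSet hf hV) fun x hx i =>
      ⟨shift^[i] x, ?_, shift_iterate_apply_zero i x⟩
  have h_zero : f _ + V _ - V _ - mf f = 0 := hx i
  have h_lower := (abs_le.1 (hC (shift (shift^[i] x)))).1
  have h_upper := (abs_le.1 (hC (shift^[i] x))).2
  rw [Set.mem_ofPred_eq]
  linarith

theorem coe_le_manePot_iff (hr0 : 0 < r) (hr1 : r < 1) {c : ℝ} :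
    (c : EReal) ≤ manePot r f x y ↔ ∀ δ > 0, ∃ᶠ z in 𝓝 x, ∃ n ≥ 1,
      shift^[n] z = y ∧ c - δ < birkhoff (fun w => f w - mf f) n z := by
  simp only [manePot, le_iInf_iff, ereal_coe_le_iff_forall_sub_lt, lt_iSup_iff, Subtype.exists,
    Subtype.forall, EReal.coe_lt_coe_iff, (nhds_hasBasis_dist' hr0 hr1 x).frequently_iff,
    Set.mem_ofPred_eq]
  constructor
  · intro h δ hδ ε hε
    obtain ⟨n, hn, z, ⟨hz, hzy⟩, hlt⟩ := h ε hε δ hδ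
    exact ⟨z, hz, n, hn, hzy, hlt⟩
  · intro h ε hε δ hδ
    obtain ⟨z, hz, n, hn, hzy, hlt⟩ := h δ hδ ε hε
    exact ⟨n, hn, z, ⟨hz, hzy⟩, hlt⟩

theorem manePot_le_sub_add_normalizedPotential (hr0 : 0 < r) (hr1 : r < 1) (hf : Continuous f)
    (hV : Continuous V) (h_le : ∀ x, normalizedPotential f V x ≤ 0) (x y : MarkovShift A) :
    manePot r f x y ≤ ((V y - V x + normalizedPotential f V x : ℝ) : EReal) := by
  refine EReal.ge_of_forall_gt_iff_ge.1 fun c hc => EReal.coe_le_coe_iff.2 ?_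
  refine le_of_forall_pos_le_add fun δ hδ => ?_
  have h_near : ∀ᶠ z in 𝓝 x, normalizedPotential f V z - V z <
      normalizedPotential f V x - V x + δ / 2 :=
    ((continuous_normalizedPotential hf hV).sub hV).continuousAt.eventually
      (gt_mem_nhds (lt_add_of_pos_right _ (half_pos hδ)))
  obtain ⟨z, ⟨n, hn, rfl, hlt⟩, hz⟩ :=
    (((coe_le_manePot_iff hr0 hr1).1 hc.le (δ / 2) (half_pos hδ)).and_eventually h_near).exists
  have h_first : birkhoff (normalizedPotential f V) n z ≤ normalizedPotential f V z := by
    obtain ⟨k, rfl⟩ := Nat.exists_eq_add_of_le hn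
    rw [birkhoff_add]
    have h_tail : birkhoff (normalizedPotential f V) k (shift^[1] z) ≤ 0 :=
      Finset.sum_nonpos fun j _ => h_le _
    simpa [birkhoff] using h_tail
  rw [birkhoff_normalizedPotential] at h_first
  linarith

theorem coe_le_manePot_shift (hr0 : 0 < r) (hr1 : r < 1) (hf : Continuous f) {c : ℝ}
    (hc : (c : EReal) ≤ manePot r f x y) :
    ((c + (f y - f x) : ℝ) : EReal) ≤ manePot r f (shift x) (shift y) := by
  refine (coe_le_manePot_iff hr0 hr1).2 fun δ hδ => ?_
  have h_near : ∀ᶠ z in 𝓝 x, f z < f x + δ / 2 :=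
    hf.continuousAt.eventually (gt_mem_nhds (lt_add_of_pos_right _ (half_pos hδ)))
  have h_return := ((coe_le_manePot_iff hr0 hr1).1 hc (δ / 2) (half_pos hδ)).and_eventually h_near
  refine continuous_shift.continuousAt.frequently (h_return.mono ?_)
  rintro z ⟨⟨n, hn, rfl, hlt⟩, hz⟩
  refine ⟨n, hn, (Function.Commute.iterate_self shift n z), ?_⟩
  rw [birkhoff_shift]
  linarith

theorem mem_zeroDeviationSet_of_zero_le_manePot (hr0 : 0 < r) (hr1 : r < 1) (hf : Continuous f)
    (hV : Continuous V) (h_le : ∀ x, normalizedPotential f V x ≤ 0)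
    (hx : 0 ≤ manePot r f x x) : x ∈ zeroDeviationSet f V := by
  intro j
  have h_return : 0 ≤ manePot r f (shift^[j] x) (shift^[j] x) := by
    induction j with
    | zero => exact hx
    | succ j ih =>
      rw [Function.iterate_succ_apply']
      simpa using coe_le_manePot_shift hr0 hr1 hf (c := 0) ih
  refine (h_le _).antisymm ?_
  simpa using
    h_return.trans (manePot_le_sub_add_normalizedPotential hr0 hr1 hf hV h_le _ _)

theorem exists_isMaximizing_ae_mem {C : Set (MarkovShift A)} (hV : Continuous V)
    (h_bdd : BoundedFun V) (hC : IsCompact C) (hne : C.Nonempty) (h_maps : Set.MapsTo shift C C)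
    (h_zero : ∀ x ∈ C, normalizedPotential f V x = 0) :
    ∃ ν, IsMaximizing f ν ∧ ∀ᵐ x ∂ν, x ∈ C := by
  obtain ⟨ν, hν, hν_shift, hνC⟩ :=
    exists_measurePreserving_ae_mem_of_isCompact continuous_shift hC hne h_maps
  have hf : f =ᵐ[ν] fun x => mf f + (V (shift x) - V x) := by
    filter_upwards [hνC] with x hx
    have h : f x + V x - V (shift x) - mf f = 0 := h_zero x hx
    linarith
  obtain ⟨B, hB⟩ := h_bdd
  have hV_int : Integrable V ν := .of_bound hV.aestronglyMeasurable B (.of_forall hB)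
  have hV_shift_int : Integrable (V ∘ shift) ν := hν_shift.integrable_comp_of_integrable hV_int
  exact ⟨ν, ⟨⟨hν, hν_shift.map_eq⟩,
    ((integrable_const _).add (hV_shift_int.sub hV_int)).congr hf.symm,
    (integral_congr_ae hf).trans (integral_const_add_coboundary hν_shift hV_int _)⟩, hνC⟩

theorem exists_isMaximizing_ae_mapClusterPt {u : ℕ → MarkovShift A} {φ : ℕ → ℕ}
    (hV : Continuous V) (h_bdd : BoundedFun V) (h_compact : IsCompact (zeroDeviationSet f V))
    (hu_mem : ∀ k, u k ∈ zeroDeviationSet f V) (hφ : Tendsto φ atTop atTop)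
    (hu : shift ∘ u =ᶠ[atTop] u ∘ φ) :
    ∃ ν, IsMaximizing f ν ∧ ∀ᵐ p ∂ν, MapClusterPt p atTop u := by
  have h_subset : {p | MapClusterPt p atTop u} ⊆ zeroDeviationSet f V := fun p hp =>
    h_compact.isClosed.mem_of_mapClusterPt hp (.of_forall hu_mem)
  have h_nonempty : {p | MapClusterPt p atTop u}.Nonempty :=
    (h_compact.exists_mapClusterPt (tendsto_principal.2 (.of_forall hu_mem))).imp fun _ => And.right
  exact exists_isMaximizing_ae_mem hV h_bdd
    (h_compact.of_isClosed_subset isClosed_setOfPred_clusterPt h_subset) h_nonempty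
    (fun _ => mapClusterPt_apply_of_eventuallyEq continuous_shift.continuousAt hφ hu)
    fun p hp => h_subset hp 0

theorem exists_mapClusterPt_orbit_and_backward_orbit {u : ℕ → MarkovShift A}
    (huniq : {μ | IsMaximizing f μ}.Subsingleton) (hV : Continuous V) (h_bdd : BoundedFun V)
    (h_compact : IsCompact (zeroDeviationSet f V)) (hx : x ∈ zeroDeviationSet f V)
    (hu_mem : ∀ k, u k ∈ zeroDeviationSet f V) (hu : ∀ k, shift (u (k + 1)) = u k) :
    ∃ q, MapClusterPt q atTop (fun n => shift^[n] x) ∧ MapClusterPt q atTop u := by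
  obtain ⟨μ, hμ, hμ_orbit⟩ := exists_isMaximizing_ae_mapClusterPt hV h_bdd h_compact
    (fun n => (mapsTo_shift_zeroDeviationSet f V).iterate n hx) (tendsto_add_atTop_nat 1)
    (.of_forall fun n => (Function.iterate_succ_apply' shift n x).symm)
  have hu_pred : shift ∘ u =ᶠ[atTop] u ∘ fun k => k - 1 := by
    filter_upwards [eventually_ge_atTop 1] with k hk
    simpa [Nat.sub_add_cancel hk] using hu (k - 1)
  obtain ⟨ν, hν, hν_backward⟩ :=
    exists_isMaximizing_ae_mapClusterPt hV h_bdd h_compact hu_mem (tendsto_sub_atTop_nat 1) hu_pred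
  have : IsProbabilityMeasure ν := hν.1.1
  rw [huniq hμ hν] at hμ_orbit
  exact (hμ_orbit.and hν_backward).exists

theorem sub_le_manePot_of_mapClusterPt (hr0 : 0 < r) (hr1 : r < 1) (hf : SatisfiesWalters f)
    (hV : Continuous V) {q : MarkovShift A} {u : ℕ → MarkovShift A}
    (hx : x ∈ zeroDeviationSet f V) (hu_mem : ∀ k, u k ∈ zeroDeviationSet f V)
    (hu : ∀ k, shift^[k] (u k) = y) (hqx : MapClusterPt q atTop fun n => shift^[n] x)
    (hqu : MapClusterPt q atTop u) :
    ((V y - V x : ℝ) : EReal) ≤ manePot r f x y := by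
  refine (coe_le_manePot_iff hr0 hr1).2 fun δ hδ =>
    (nhds_hasBasis_cylOf x).frequently_iff.2 fun {N} _ => ?_
  have hδ' : 0 < δ / 3 := by positivity
  obtain ⟨k₀, hk₀⟩ := hf.exists_abs_birkhoff_sub_lt hδ'
  have h_near : ∀ᶠ p in 𝓝 q, p ∈ cylOf q (k₀ + N + 1) ∧ |V p - V q| < δ / 3 :=
    Eventually.and (cylOf_mem_nhds q _) (Metric.tendsto_nhds.1 hV.continuousAt _ hδ')
  obtain ⟨n, hn, hVn⟩ := (hqx.frequently h_near).exists
  obtain ⟨k, ⟨hk, hVk⟩, hk_pos⟩ :=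
    ((hqu.frequently h_near).and_eventually (eventually_ge_atTop 1)).exists
  obtain ⟨z, hzx, hz⟩ := exists_mem_cylOf_shift_iterate_eq (k₀ + N).succ_ne_zero
    fun i hi => (hk i hi).trans (hn i hi).symm
  refine ⟨z, cylOf_antitone x (by lia) hzx, n + k, by lia, ?_, ?_⟩
  · rw [add_comm, Function.iterate_add_apply, hz, hu]
  · have h_walters := abs_lt.1 (hk₀ n x z (cylOf_antitone x (by lia) hzx))
    have h_orbit := birkhoff_eq_sub_of_mem_zeroDeviationSet hx n
    rw [birkhoff_sub_const] at h_orbit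
    rw [birkhoff_add, hz, birkhoff_eq_sub_of_mem_zeroDeviationSet (hu_mem k), hu,
      birkhoff_sub_const]
    linarith [abs_lt.1 hVn, abs_lt.1 hVk]

theorem manePot_eq_sub_of_mem_zeroDeviationSet (hr0 : 0 < r) (hr1 : r < 1)
    (h_coercive : IsCoercive f) (hf : SatisfiesWalters f)
    (huniq : {μ | IsMaximizing f μ}.Subsingleton)
    (hV : IsCalibratedSubaction f V) (hx : x ∈ zeroDeviationSet f V)
    (hy : y ∈ zeroDeviationSet f V) :
    manePot r f x y = ((V y - V x : ℝ) : EReal) := by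
  obtain ⟨hV_cont, h_bdd, h_le, h_cal⟩ := hV
  have h_upper := manePot_le_sub_add_normalizedPotential hr0 hr1 hf.continuous hV_cont h_le x y
  rw [show normalizedPotential f V x = 0 from hx 0, add_zero] at h_upper
  obtain ⟨u, rfl, hu_mem, hu⟩ :=
    exists_backward_orbit_of_surjOn (surjOn_shift_zeroDeviationSet h_cal) hy
  obtain ⟨q, hqx, hqu⟩ := exists_mapClusterPt_orbit_and_backward_orbit huniq hV_cont h_bdd
    (isCompact_zeroDeviationSet h_coercive hf.continuous hV_cont h_bdd) hx hu_mem hu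
  exact h_upper.antisymm (sub_le_manePot_of_mapClusterPt hr0 hr1 hf hV_cont hx hu_mem
    (iterate_apply_backward_orbit hu) hqx hqu)

theorem aubry_eq_zero_set_of_deviation_general (hr0 : 0 < r) (hr1 : r < 1)
    (h_coercive : IsCoercive f) (hf : SatisfiesWalters f)
    (huniq : {μ | IsMaximizing f μ}.Subsingleton) (hV : IsCalibratedSubaction f V) :
    {x : MarkovShift A | manePot r f x x = 0} =
      {x : MarkovShift A |
        (∑' j : ℕ, ENNReal.ofReal
          (-(f (shift^[j] x) + V (shift^[j] x) - V (shift (shift^[j] x)) - mf f))) = 0} := by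
  ext x
  refine Iff.trans ⟨fun h => ?_, fun hx => ?_⟩
    (tsum_ofReal_neg_normalizedPotential_eq_zero_iff hV.2.2.1).symm
  · exact mem_zeroDeviationSet_of_zero_le_manePot hr0 hr1 hf.continuous hV.1 hV.2.2.1 h.ge
  · simpa using manePot_eq_sub_of_mem_zeroDeviationSet hr0 hr1 h_coercive hf huniq hV hx hx

end MarkovShift

namespace MarkovShift

/-- The Aubry set coincides with the zero set of the deviation function:
`Ω(f,σ) = {x : I(x) = 0}` where `I(x) = -Σ_j (f + V - V∘σ - m(f))(σʲ x)`. -/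
theorem aubry_eq_zero_set_of_deviation
    (A : ℕ → ℕ → Bool) (r : ℝ) (hr0 : 0 < r) (hr1 : r < 1)
    (hmix : TopologicallyMixing A)
    (hbip : FinitelyPrimitive A)
    (f : MarkovShift A → ℝ)
    (hWalters : SatisfiesWalters f)
    (hVar1 : Var1Finite f)
    (p : ℝ)
    (hPfin : HasGurevichPressure f p)
    (μmax : Measure (MarkovShift A))
    (hmax : IsMaximizing f μmax)
    (huniq : ∀ ν', IsMaximizing f ν' → ν' = μmax)
    (V : MarkovShift A → ℝ)
    (hV : IsCalibratedSubaction f V) :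
    {x : MarkovShift A | manePot r f x x = 0} =
      {x : MarkovShift A |
        (∑' j : ℕ, ENNReal.ofReal
          (-(f (shift^[j] x) + V (shift^[j] x) - V (shift (shift^[j] x)) - mf f))) = 0} :=
  aubry_eq_zero_set_of_deviation_general hr0 hr1
    (isCoercive_of_summable hbip hVar1 fun a ha => (hPfin a ha).1) hWalters
    (fun μ hμ ν hν => (huniq μ hμ).trans (huniq ν hν).symm) hV

end MarkovShift
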